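/- Let N be a positive integer with N ≠ 4. The normalizer in SL(2,ℝ) of the subgroup ±Γ₁(N) is generated by −I, the image of Γ₀(N), and the Atkin–Lehner matrices w_d for Hall divisors d of N; equivalently, Norm(Γ₁(N))/±Γ₁(N) is generated by the classes of elements of Γ₀(N)/±1 and the classes of the w_d with d ∣ N and gcd(d, N/d) = 1. -/

import Mathlib

open Matrix CongruenceSubgroup

/-- The reduction-of-scalars map `SL(2, ℤ) →* SL(2, ℝ)`. -/
def SL2ZtoSL2R : Matrix.SpecialLinearGroup (Fin 2) ℤ →* Matrix.SpecialLinearGroup (Fin 2) ℝ :=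
  Matrix.SpecialLinearGroup.map (Int.castRingHom ℝ)

/-- The subgroup `±Γ₁(N)` of `SL(2, ℝ)`, generated by the image of `Γ₁(N)` and `-1`. -/
def PMGamma1 (N : ℕ) : Subgroup (Matrix.SpecialLinearGroup (Fin 2) ℝ) :=
  (Gamma1 N).map SL2ZtoSL2R ⊔ Subgroup.zpowers (-1)

/-- `w` is an Atkin–Lehner matrix of level `N` for the Hall divisor `d` of `N`:
a matrix of the form `(1/√d)·!![da, b; Nc, dd']` with integer entries (and determinant 1,
which holds automatically as `w ∈ SL(2, ℝ)`). -/
def IsAtkinLehner (N d : ℕ) (w : Matrix.SpecialLinearGroup (Fin 2) ℝ) : Prop :=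
  ∃ a b c d' : ℤ, (w : Matrix (Fin 2) (Fin 2) ℝ) =
    (Real.sqrt d)⁻¹ • !![(d : ℝ) * (a : ℝ), (b : ℝ); (N : ℝ) * (c : ℝ), (d : ℝ) * (d' : ℝ)]

lemma SL2ZtoSL2R_apply (γ : Matrix.SpecialLinearGroup (Fin 2) ℤ) (i j : Fin 2) :
    SL2ZtoSL2R γ i j = (γ i j : ℝ) := rfl

lemma PMGamma1_mem_iff (N : ℕ) (M : Matrix.SpecialLinearGroup (Fin 2) ℝ) :
    M ∈ PMGamma1 N ↔ ∃ t p q r s : ℤ, (t = 1 ∨ t = -1) ∧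
      (M : Matrix (Fin 2) (Fin 2) ℝ) =
        !![(t : ℝ) + N * p, (q : ℝ); (N : ℝ) * r, (t : ℝ) + N * s] := by
  have hnormal : (Subgroup.zpowers (-1 : Matrix.SpecialLinearGroup (Fin 2) ℝ)).Normal := by
    refine ⟨fun x hx g => ?_⟩
    obtain ⟨k, rfl⟩ := Subgroup.mem_zpowers_iff.mp hx
    have hcomm : Commute g ((-1 : Matrix.SpecialLinearGroup (Fin 2) ℝ) ^ k) :=
      ((Commute.one_right g).neg_right).zpow_right k
    rw [hcomm.eq, mul_inv_cancel_right]
    exact hx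
  have hGamma1 : ∀ γ ∈ Gamma1 N, ∃ p q r s : ℤ, (γ : Matrix (Fin 2) (Fin 2) ℤ) =
      !![1 + N * p, q; N * r, 1 + N * s] := by
    intro γ hγ
    obtain ⟨h0, h1, h2⟩ := (Gamma1_mem N γ).mp hγ
    have h0' : ((N : ℤ)) ∣ γ 0 0 - 1 := by
      rw [← ZMod.intCast_zmod_eq_zero_iff_dvd _ N]; push_cast; rw [h0]; ring
    have h1' : ((N : ℤ)) ∣ γ 1 1 - 1 := by
      rw [← ZMod.intCast_zmod_eq_zero_iff_dvd _ N]; push_cast; rw [h1]; ring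
    have h2' : ((N : ℤ)) ∣ γ 1 0 := (ZMod.intCast_zmod_eq_zero_iff_dvd _ N).mp h2
    obtain ⟨p, hp⟩ := h0'
    obtain ⟨s, hs⟩ := h1'
    obtain ⟨r, hr⟩ := h2'
    refine ⟨p, γ 0 1, r, s, ?_⟩
    ext i j
    fin_cases i <;> fin_cases j <;> simp <;> linarith
  constructor
  · intro hM
    obtain ⟨x, hx, y, hy, rfl⟩ := Subgroup.mem_sup_of_normal_right.mp hM
    obtain ⟨γ, hγ, rfl⟩ := Subgroup.mem_map.mp hx
    obtain ⟨k, rfl⟩ := Subgroup.mem_zpowers_iff.mp hy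
    obtain ⟨p, q, r, s, hpq⟩ := hGamma1 γ hγ
    have hγR : (SL2ZtoSL2R γ : Matrix (Fin 2) (Fin 2) ℝ) =
        !![1 + (N : ℝ) * p, (q : ℝ); (N : ℝ) * r, 1 + (N : ℝ) * s] := by
      ext i j
      have hij := congrArg (fun m : Matrix (Fin 2) (Fin 2) ℤ => ((m i j : ℤ) : ℝ)) hpq
      fin_cases i <;> fin_cases j <;> simpa [SL2ZtoSL2R_apply] using hij
    rcases Int.even_or_odd k with hk | hk
    · refine ⟨1, p, q, r, s, Or.inl rfl, ?_⟩
      rw [hk.neg_one_zpow, mul_one, hγR]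
      simp
    · refine ⟨-1, -p, -q, -r, -s, Or.inr rfl, ?_⟩
      rw [hk.neg_one_zpow, mul_neg, mul_one, Matrix.SpecialLinearGroup.coe_neg, hγR]
      ext i j
      fin_cases i <;> fin_cases j <;> simp <;> ring
  · rintro ⟨t, p, q, r, s, ht, hM⟩
    have htt : t * t = 1 := by rcases ht with rfl | rfl <;> norm_num
    have hdetR := M.det_coe
    rw [hM, Matrix.det_fin_two_of] at hdetR
    have hdet : (t + N * p) * (t + N * s) - q * (N * r) = 1 := by exact_mod_cast hdetR
    let γ : Matrix.SpecialLinearGroup (Fin 2) ℤ :=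
      ⟨!![1 + N * (t * p), t * q; N * (t * r), 1 + N * (t * s)], by
        rw [Matrix.det_fin_two_of]
        linear_combination hdet + (-1 + N^2 * p * s - q * N * r) * htt⟩
    have hγ : γ ∈ Gamma1 N := by
      rw [Gamma1_mem]
      simp [γ]
    have hmem : SL2ZtoSL2R γ ∈ PMGamma1 N :=
      Subgroup.mem_sup_left (Subgroup.mem_map_of_mem _ hγ)
    have hneg : (-1 : Matrix.SpecialLinearGroup (Fin 2) ℝ) ∈ PMGamma1 N :=
      Subgroup.mem_sup_right (Subgroup.mem_zpowers _)
    have hγR : (SL2ZtoSL2R γ : Matrix (Fin 2) (Fin 2) ℝ) =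
        !![1 + (N : ℝ) * (t * p), (t : ℝ) * q; (N : ℝ) * (t * r), 1 + (N : ℝ) * (t * s)] := by
      ext i j
      rw [SL2ZtoSL2R_apply]
      fin_cases i <;> fin_cases j <;> simp [γ]
    rcases ht with rfl | rfl
    · have : M = SL2ZtoSL2R γ := by
        apply Subtype.ext
        rw [hM, hγR]
        simp
      rwa [this]
    · have : M = -1 * SL2ZtoSL2R γ := by
        apply Subtype.ext
        rw [hM, neg_one_mul, Matrix.SpecialLinearGroup.coe_neg, hγR]
        ext i j
        fin_cases i <;> fin_cases j <;> simp <;> ring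
      rw [this]
      exact mul_mem hneg hmem

lemma IsAtkinLehner.det_eq {N d n : ℕ} (hd : d ≠ 0) (hdn : d * n = N)
    {w : Matrix.SpecialLinearGroup (Fin 2) ℝ} {a b c e : ℤ}
    (hw : (w : Matrix (Fin 2) (Fin 2) ℝ) =
      (Real.sqrt d)⁻¹ • !![(d : ℝ) * (a : ℝ), (b : ℝ); (N : ℝ) * (c : ℝ), (d : ℝ) * (e : ℝ)]) :
    (d : ℤ) * a * e - n * b * c = 1 := by
  have hd0 : (0 : ℝ) < d := by positivity
  have hN : (N : ℝ) = d * n := by exact_mod_cast hdn.symm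
  have hsq : (Real.sqrt d)⁻¹ * (Real.sqrt d)⁻¹ * (d : ℝ) = 1 := by
    rw [← mul_inv, Real.mul_self_sqrt hd0.le, inv_mul_cancel₀ hd0.ne']
  have hdet := w.det_coe
  rw [hw, Matrix.det_fin_two] at hdet
  simp only [Matrix.smul_apply, Matrix.of_apply, Matrix.cons_val', Matrix.cons_val_zero,
    Matrix.cons_val_one, Matrix.cons_val_fin_one, smul_eq_mul, hN] at hdet
  have : (d : ℝ) * a * e - n * b * c = 1 := by
    linear_combination hdet - ((d : ℝ) * a * e - n * b * c) * hsq
  exact_mod_cast this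

lemma IsAtkinLehner.inv {N d : ℕ} {w : Matrix.SpecialLinearGroup (Fin 2) ℝ}
    (hw : IsAtkinLehner N d w) : IsAtkinLehner N d w⁻¹ := by
  obtain ⟨a, b, c, e, hw⟩ := hw
  refine ⟨e, -b, -c, a, ?_⟩
  rw [Matrix.SpecialLinearGroup.coe_inv, hw, Matrix.adjugate_fin_two]
  ext i j
  fin_cases i <;> fin_cases j <;> simp

lemma IsAtkinLehner.conj_mem {N d : ℕ} (hN : 0 < N) (hd : d ∣ N)
    {w : Matrix.SpecialLinearGroup (Fin 2) ℝ} (hw : IsAtkinLehner N d w)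
    {M : Matrix.SpecialLinearGroup (Fin 2) ℝ} (hM : M ∈ PMGamma1 N) :
    w * M * w⁻¹ ∈ PMGamma1 N := by
  obtain ⟨n, rfl⟩ := hd
  have hd0 : d ≠ 0 := by rintro rfl; simp at hN
  obtain ⟨a, b, c, e, hw⟩ := hw
  have hdet := IsAtkinLehner.det_eq hd0 rfl hw
  have hdetR : (d : ℝ) * a * e - n * b * c = 1 := by exact_mod_cast hdet
  have hdpos : (0 : ℝ) < d := by positivity
  have hsq : (Real.sqrt d)⁻¹ * (Real.sqrt d)⁻¹ * (d : ℝ) = 1 := by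
    rw [← mul_inv, Real.mul_self_sqrt hdpos.le, inv_mul_cancel₀ hdpos.ne']
  obtain ⟨t, p, q, r, s, ht, hM⟩ := (PMGamma1_mem_iff _ _).mp hM
  refine (PMGamma1_mem_iff _ _).mpr ⟨t, d * a * e * p + b * r * e - a * q * c - n * b * c * s,
    -a * b * (d * n * p) - n * r * b ^ 2 + d * a ^ 2 * q + a * b * (d * n * s),
    c * e * (d * n * p) + d * e ^ 2 * r - n * c ^ 2 * q - e * c * (d * n * s),
    -n * c * b * p - e * r * b + c * q * a + d * e * a * s, ht, ?_⟩
  rw [Matrix.SpecialLinearGroup.coe_mul, Matrix.SpecialLinearGroup.coe_mul,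
    Matrix.SpecialLinearGroup.coe_inv, hw, hM, Matrix.adjugate_fin_two]
  generalize (Real.sqrt d)⁻¹ = u at hsq
  ext i j
  fin_cases i <;> fin_cases j <;> simp [Matrix.mul_apply, Fin.sum_univ_two]
  · linear_combination (t : ℝ) * hdetR + (d * a * e * (t + d * n * p) + b * d * n * r * e
      - a * q * d * n * c - n * b * c * (t + d * n * s) : ℝ) * hsq
  · linear_combination (-a * b * (t + d * n * p) - n * r * b ^ 2 + d * a ^ 2 * q
      + a * b * (t + d * n * s) : ℝ) * hsq
  · linear_combination (d * n * (c * e * (t + d * n * p) + d * e ^ 2 * r - n * c ^ 2 * q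
      - e * c * (t + d * n * s)) : ℝ) * hsq
  · linear_combination (t : ℝ) * hdetR + (-n * c * b * (t + d * n * p) - e * d * n * r * b
      + d * n * c * q * a + d * e * a * (t + d * n * s) : ℝ) * hsq

lemma IsAtkinLehner.mem_normalizer {N d : ℕ} (hN : 0 < N) (hd : d ∣ N)
    {w : Matrix.SpecialLinearGroup (Fin 2) ℝ} (hw : IsAtkinLehner N d w) :
    w ∈ Subgroup.normalizer (PMGamma1 N : Set (Matrix.SpecialLinearGroup (Fin 2) ℝ)) := by
  rw [Subgroup.mem_normalizer_iff]
  intro h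
  refine ⟨fun hh => hw.conj_mem hN hd hh, fun hh => ?_⟩
  have := hw.inv.conj_mem hN hd hh
  simpa [mul_assoc] using this

lemma isAtkinLehner_one_of_mem_Gamma0 {N : ℕ} {γ : Matrix.SpecialLinearGroup (Fin 2) ℤ}
    (hγ : γ ∈ Gamma0 N) : IsAtkinLehner N 1 (SL2ZtoSL2R γ) := by
  obtain ⟨r, hr⟩ := (ZMod.intCast_zmod_eq_zero_iff_dvd _ N).mp (Gamma0_mem.mp hγ)
  refine ⟨γ 0 0, γ 0 1, r, γ 1 1, ?_⟩
  ext i j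
  fin_cases i <;> fin_cases j <;> simp [SL2ZtoSL2R_apply, hr]

/-- A rational number whose square is an integer is an integer. -/
lemma exists_int_eq_of_mul_eq_int {v : ℝ} {m D V : ℤ} (hm : m ≠ 0) (hv : m * v = D)
    (hV : v ^ 2 = V) : ∃ k : ℤ, v = k := by
  have hsq : m ^ 2 * V = D ^ 2 := by
    have : (m : ℝ) ^ 2 * V = D ^ 2 := by rw [← hv, ← hV]; ring
    exact_mod_cast this
  obtain ⟨k, rfl⟩ := (Int.pow_dvd_pow_iff two_ne_zero).mp (Dvd.intro _ hsq)
  refine ⟨k, mul_left_cancel₀ (Int.cast_ne_zero.mpr hm : (m : ℝ) ≠ 0) ?_⟩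
  rw [hv]; push_cast; ring

/-- Integral pairwise products and a Bézout relation force integrality. -/
lemma exists_int_eq_of_bezout {x y z w : ℝ} {d n : ℤ}
    (hxx : ∃ k : ℤ, x ^ 2 = k) (hyy : ∃ k : ℤ, y ^ 2 = k) (hzz : ∃ k : ℤ, z ^ 2 = k)
    (hww : ∃ k : ℤ, w ^ 2 = k) (hxy : ∃ k : ℤ, x * y = k) (hxz : ∃ k : ℤ, x * z = k)
    (hxw : ∃ k : ℤ, x * w = k) (hyz : ∃ k : ℤ, y * z = k) (h : d * (x * w) - n * (y * z) = 1) :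
    ∃ k : ℤ, x = k := by
  rcases eq_or_ne x 0 with rfl | hx0
  · exact ⟨0, by simp⟩
  obtain ⟨X, hX⟩ := hxx
  have hXpos : 0 < X := by
    have : (0 : ℝ) < X := by rw [← hX]; positivity
    exact_mod_cast this
  obtain ⟨t, f, htf, hsf⟩ := Nat.sq_mul_squarefree X.toNat
  have hXf : (f : ℤ) ^ 2 * t = X := by
    rw [← Int.toNat_of_nonneg hXpos.le]; exact_mod_cast htf
  have hsfz : Squarefree (t : ℤ) := Int.squarefree_natCast.mpr hsf
  have hf0 : (f : ℤ) ≠ 0 := by rintro h0; rw [h0] at hXf; simp at hXf; omega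
  have ht0 : (t : ℤ) ≠ 0 := by rintro h0; rw [h0] at hXf; simp at hXf; omega
  have key : ∀ v : ℝ, (∃ k : ℤ, v ^ 2 = k) → (∃ k : ℤ, x * v = k) →
      ∃ k : ℤ, v ^ 2 = ((t * k : ℤ) : ℝ) := by
    rintro v ⟨V, hV⟩ ⟨k, hk⟩
    have h1 : (f : ℤ) ^ 2 * (t * V) = k ^ 2 := by
      have : (X : ℝ) * V = k ^ 2 := by rw [← hX, ← hV, ← hk]; ring
      have : X * V = k ^ 2 := by exact_mod_cast this
      rw [← this, ← hXf]; ring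
    obtain ⟨m, rfl⟩ := (Int.pow_dvd_pow_iff two_ne_zero).mp (Dvd.intro _ h1)
    have h2 : (t : ℤ) * V = m ^ 2 := by
      apply mul_left_cancel₀ (pow_ne_zero 2 hf0)
      rw [h1]; ring
    obtain ⟨l, rfl⟩ := (hsfz.dvd_pow_iff_dvd two_ne_zero).mp
      (Dvd.intro _ h2)
    refine ⟨l ^ 2, ?_⟩
    rw [hV]
    congr 1
    apply mul_left_cancel₀ ht0
    rw [h2]; ring
  have dvd_of : ∀ u v : ℝ, ∀ k : ℤ, u * v = k → (∃ k : ℤ, u ^ 2 = ((t * k : ℤ) : ℝ)) →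
      (∃ k : ℤ, v ^ 2 = ((t * k : ℤ) : ℝ)) → (t : ℤ) ∣ k := by
    rintro u v k hk ⟨U, hU⟩ ⟨V, hV⟩
    apply (hsfz.dvd_pow_iff_dvd two_ne_zero).mp
    have : (k : ℝ) ^ 2 = ((t * U * (t * V) : ℤ) : ℝ) := by
      rw [← hk, mul_pow, hU, hV]; push_cast; ring
    have : k ^ 2 = t * U * (t * V) := by exact_mod_cast this
    exact ⟨U * (t * V), by rw [this]; ring⟩
  have hxt : ∃ k : ℤ, x ^ 2 = ((t * k : ℤ) : ℝ) := ⟨f ^ 2, by rw [hX, ← hXf, mul_comm]⟩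
  have hyt := key y hyy hxy
  have hzt := key z hzz hxz
  have hwt := key w hww hxw
  obtain ⟨P, hP⟩ := hxw
  obtain ⟨Q, hQ⟩ := hyz
  have hPQ : d * P - n * Q = 1 := by
    rw [hP, hQ] at h; exact_mod_cast h
  have ht1 : (t : ℤ) ∣ 1 := by
    rw [← hPQ]
    exact dvd_sub (Dvd.dvd.mul_left (dvd_of x w P hP hxt hwt) _)
      (Dvd.dvd.mul_left (dvd_of y z Q hQ hyt hzt) _)
  have ht1' : (t : ℤ) = 1 := Int.eq_one_of_dvd_one (by positivity) ht1
  rw [ht1', mul_one] at hXf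
  rw [← hXf] at hX
  push_cast at hX
  rcases sq_eq_sq_iff_eq_or_eq_neg.mp hX with h | h
  · exact ⟨f, by exact_mod_cast h⟩
  · exact ⟨-f, by rw [h]; simp⟩

lemma exists_hall_divisor {N : ℕ} {A B C E P Q R K M S : ℤ} (hN : 0 < N)
    (hAE : A * E = P ^ 2) (hPQ : P - Q = 1) (hAQ : A * Q = N * (R * K))
    (hEQ : E * Q = N * (S * M)) (hAB : A * B = N * R ^ 2) (hAC : A * C = N * K ^ 2) :
    ∃ d n : ℕ, d * n = N ∧ Nat.Coprime d n ∧ (d : ℤ) ∣ A ∧ (d : ℤ) ∣ E ∧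
      (n : ℤ) ∣ B ∧ (n : ℤ) ∣ C := by
  set d := Int.gcd N A with hd
  have hdN : (d : ℤ) ∣ N := Int.gcd_dvd_left _ _
  have hdA : (d : ℤ) ∣ A := Int.gcd_dvd_right _ _
  obtain ⟨n, hn⟩ := Int.natCast_dvd_natCast.mp hdN
  have hd0 : (d : ℤ) ≠ 0 := by
    intro h; have : d = 0 := by exact_mod_cast h
    rw [this] at hn; simp at hn; omega
  have hNdn : (N : ℤ) = d * n := by exact_mod_cast hn
  obtain ⟨A', hA'⟩ := hdA
  have hcop : IsCoprime (n : ℤ) A' := by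
    rw [Int.isCoprime_iff_gcd_eq_one]
    have h1 : Int.gcd ((d : ℤ) * n) (d * A') = d := by rw [← hNdn, ← hA']
    rw [Int.gcd_mul_left, Int.natAbs_natCast] at h1
    have : d ≠ 0 := by exact_mod_cast hd0
    exact Nat.eq_of_mul_eq_mul_left (Nat.pos_of_ne_zero this) (by rw [h1, mul_one])
  have hnQ : (n : ℤ) ∣ Q := by
    apply hcop.dvd_of_dvd_mul_left
    refine ⟨R * K, mul_left_cancel₀ hd0 ?_⟩
    rw [hNdn, hA'] at hAQ; linear_combination hAQ
  have hPQcop : IsCoprime (P ^ 2) Q := IsCoprime.pow_left ⟨1, -1, by linear_combination hPQ⟩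
  have hAQcop : IsCoprime A Q := hPQcop.of_isCoprime_of_dvd_left (Dvd.intro _ hAE)
  have hdQ : IsCoprime (d : ℤ) Q := hAQcop.of_isCoprime_of_dvd_left ⟨A', hA'⟩
  have hAn : IsCoprime (n : ℤ) A := (hAQcop.of_isCoprime_of_dvd_right hnQ).symm
  have hnN : (n : ℤ) ∣ N := ⟨d, by rw [hNdn, mul_comm]⟩
  refine ⟨d, n, hn.symm, Nat.isCoprime_iff_coprime.mp (hdQ.of_isCoprime_of_dvd_right hnQ),
    ⟨A', hA'⟩, ?_, ?_, ?_⟩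
  · exact hdQ.dvd_of_dvd_mul_right (hEQ ▸ Dvd.dvd.mul_right hdN _)
  · exact hAn.dvd_of_dvd_mul_left (hAB ▸ Dvd.dvd.mul_right hnN _)
  · exact hAn.dvd_of_dvd_mul_left (hAC ▸ Dvd.dvd.mul_right hnN _)

/-- The entries of a unipotent element of `±Γ₁(N)`, for `N ≠ 4`. -/
lemma entries_of_unipotent_mem_PMGamma1 {N : ℕ} (hN4 : N ≠ 4)
    {M : Matrix.SpecialLinearGroup (Fin 2) ℝ} (hM : M ∈ PMGamma1 N) {x y z : ℝ}
    (h : (M : Matrix (Fin 2) (Fin 2) ℝ) = !![1 - x, y; z, 1 + x]) :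
    (∃ k : ℤ, x = N * k) ∧ (∃ k : ℤ, y = k) ∧ (∃ k : ℤ, z = N * k) := by
  obtain ⟨t, p, q, r, s, ht, hM⟩ := (PMGamma1_mem_iff _ _).mp hM
  rw [h] at hM
  have h00 := congrFun (congrFun hM 0) 0
  have h01 := congrFun (congrFun hM 0) 1
  have h10 := congrFun (congrFun hM 1) 0
  have h11 := congrFun (congrFun hM 1) 1
  simp at h00 h01 h10 h11
  refine ⟨?_, ⟨q, h01⟩, ⟨r, h10⟩⟩
  rcases ht with rfl | rfl
  · refine ⟨-p, ?_⟩
    push_cast at h00 ⊢; linear_combination -h00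
  · push_cast at h00 h11
    have h4 : (N : ℤ) * (p + s) = 4 := by
      have : (N : ℝ) * (p + s) = 4 := by linear_combination -h00 - h11
      exact_mod_cast this
    have hdvd : N ∣ 4 := by
      have : (N : ℤ) ∣ (4 : ℕ) := ⟨_, h4.symm⟩
      exact_mod_cast this
    have hle : N ≤ 4 := Nat.le_of_dvd (by norm_num) hdvd
    have h2 : N ∣ 2 := by interval_cases N <;> simp_all
    obtain ⟨m, hm⟩ := h2
    have hmR : (2 : ℝ) = N * m := by exact_mod_cast hm
    refine ⟨m - p, ?_⟩
    push_cast
    linear_combination hmR - h00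

lemma exists_isAtkinLehner_of_entries {N : ℕ} (hN : 0 < N)
    (g : Matrix.SpecialLinearGroup (Fin 2) ℝ) {a b c e : ℝ}
    (hg : (g : Matrix (Fin 2) (Fin 2) ℝ) = !![a, b; c, e])
    (haa : ∃ k : ℤ, a ^ 2 = k) (hee : ∃ k : ℤ, e ^ 2 = k)
    (hbb : ∃ k : ℤ, N * b ^ 2 = k) (hcc : ∃ k : ℤ, c ^ 2 = N * k)
    (hac : ∃ k : ℤ, a * c = N * k) (hec : ∃ k : ℤ, e * c = N * k)
    (hbe : ∃ k : ℤ, b * e = k) (hab : ∃ k : ℤ, a * b = k) :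
    ∃ d : ℕ, d ∣ N ∧ Nat.gcd d (N / d) = 1 ∧ IsAtkinLehner N d g := by
  have hdet : a * e - b * c = 1 := by
    have := g.det_coe
    rwa [hg, Matrix.det_fin_two_of] at this
  obtain ⟨A, hA⟩ := haa
  obtain ⟨E, hE⟩ := hee
  obtain ⟨B, hB⟩ := hbb
  obtain ⟨C, hC⟩ := hcc
  obtain ⟨K, hK⟩ := hac
  obtain ⟨M, hM⟩ := hec
  obtain ⟨S, hS⟩ := hbe
  obtain ⟨R, hR⟩ := hab
  have hNR : (0 : ℝ) < N := by positivity
  obtain ⟨P, hP⟩ : ∃ P : ℤ, a * e = P := by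
    rcases eq_or_ne c 0 with rfl | hc
    · exact ⟨1, by push_cast; linear_combination hdet⟩
    have hC0 : C ≠ 0 := by
      rintro rfl
      simp at hC; exact hc hC
    refine exists_int_eq_of_mul_eq_int (D := N * (K * M)) (V := A * E) hC0 ?_ ?_
    · apply mul_left_cancel₀ hNR.ne'
      push_cast
      linear_combination -(a * e) * hC + e * c * hK + N * K * hM
    · push_cast; rw [← hA, ← hE]; ring
  obtain ⟨Q, hQ⟩ : ∃ Q : ℤ, b * c = Q := ⟨P - 1, by push_cast; linear_combination hP - hdet⟩
  have hPQ : P - Q = 1 := by rw [hP, hQ] at hdet; exact_mod_cast hdet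
  have hAE : A * E = P ^ 2 := by
    have : (A : ℝ) * E = P ^ 2 := by rw [← hA, ← hE, ← hP]; ring
    exact_mod_cast this
  have hAQ : A * Q = N * (R * K) := by
    have : (A : ℝ) * Q = N * (R * K) := by
      rw [← hA, ← hQ, ← hR]; linear_combination a * b * hK
    exact_mod_cast this
  have hEQ : E * Q = N * (S * M) := by
    have : (E : ℝ) * Q = N * (S * M) := by
      rw [← hE, ← hQ, ← hS]; linear_combination b * e * hM
    exact_mod_cast this
  have hAB : A * B = N * R ^ 2 := by
    have : (A : ℝ) * B = N * R ^ 2 := by rw [← hA, ← hB, ← hR]; ring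
    exact_mod_cast this
  have hAC : A * C = N * K ^ 2 := by
    have : (A : ℝ) * C = N * K ^ 2 := by
      apply mul_left_cancel₀ hNR.ne'
      rw [← hA]; linear_combination -a ^ 2 * hC + (a * c + N * K) * hK
    exact_mod_cast this
  obtain ⟨d, n, rfl, hcop, ⟨A', rfl⟩, ⟨E', rfl⟩, ⟨B', rfl⟩, ⟨C', rfl⟩⟩ :=
    exists_hall_divisor hN hAE hPQ hAQ hEQ hAB hAC
  have hd0 : 0 < d := Nat.pos_of_mul_pos_right hN
  have hn0 : 0 < n := Nat.pos_of_mul_pos_left hN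
  have hdR : (0 : ℝ) < d := by positivity
  have hnR : (0 : ℝ) < n := by positivity
  obtain ⟨u, hu0, hu⟩ : ∃ u : ℝ, 0 < u ∧ u ^ 2 = d :=
    ⟨Real.sqrt d, Real.sqrt_pos.mpr hdR, Real.sq_sqrt hdR.le⟩
  have hsqrt : Real.sqrt d = u := by rw [← hu, Real.sqrt_sq hu0.le]
  push_cast at hA hB hC hE hK hM
  rw [← hu] at hA hB hC hE hK hM
  have hx : ∃ x : ℝ, a = u * x := ⟨a / u, by field_simp⟩
  have hy : ∃ y : ℝ, b = y / u := ⟨b * u, by field_simp⟩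
  have hz : ∃ z : ℝ, c = u * n * z := ⟨c / (u * n), by field_simp⟩
  have hw : ∃ w : ℝ, e = u * w := ⟨e / u, by field_simp⟩
  obtain ⟨x, rfl⟩ := hx
  obtain ⟨y, rfl⟩ := hy
  obtain ⟨z, rfl⟩ := hz
  obtain ⟨w, rfl⟩ := hw
  have hxx : x ^ 2 = A' := by field_simp at hA; linear_combination hA
  have hww : w ^ 2 = E' := by field_simp at hE; linear_combination hE
  have hyy : y ^ 2 = B' := by field_simp at hB; linear_combination hB
  have hzz : z ^ 2 = C' := by field_simp at hC; linear_combination hC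
  have hxz : x * z = K := by field_simp at hK; linear_combination hK
  have hwz : w * z = M := by field_simp at hM; linear_combination hM
  have hyw : y * w = S := by field_simp at hS; linear_combination hS
  have hxy : x * y = R := by field_simp at hR; linear_combination hR
  have hdet' : (d : ℝ) * (x * w) - n * (y * z) = 1 := by
    rw [← hu]; field_simp at hdet; linear_combination hdet
  obtain ⟨I, hyz⟩ : ∃ k : ℤ, y * z = k := by
    refine exists_int_eq_of_mul_eq_int (m := n) (D := Q) (V := B' * C') (by positivity) ?_ ?_
    · push_cast; field_simp at hQ; linear_combination hQ
    · push_cast; rw [← hyy, ← hzz]; ring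
  obtain ⟨J, hxw⟩ : ∃ k : ℤ, x * w = k := by
    refine exists_int_eq_of_mul_eq_int (m := d) (D := P) (V := A' * E') (by positivity) ?_ ?_
    · push_cast; rw [← hu]; linear_combination hP
    · push_cast; rw [← hxx, ← hww]; ring
  have hwx : w * x = J := by rw [mul_comm, hxw]
  have hzy : z * y = I := by rw [mul_comm, hyz]
  have hzw : z * w = M := by rw [mul_comm, hwz]
  have hwy : w * y = S := by rw [mul_comm, hyw]
  have hyx : y * x = R := by rw [mul_comm, hxy]
  have hzx : z * x = K := by rw [mul_comm, hxz]
  obtain ⟨x', rfl⟩ := exists_int_eq_of_bezout (d := d) (n := n) ⟨_, hxx⟩ ⟨_, hyy⟩ ⟨_, hzz⟩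
    ⟨_, hww⟩ ⟨_, hxy⟩ ⟨_, hxz⟩ ⟨_, hxw⟩ ⟨_, hyz⟩ (by push_cast; exact hdet')
  obtain ⟨w', rfl⟩ := exists_int_eq_of_bezout (d := d) (n := n) ⟨_, hww⟩ ⟨_, hyy⟩ ⟨_, hzz⟩
    ⟨_, hxx⟩ ⟨_, hwy⟩ ⟨_, hwz⟩ ⟨_, hwx⟩ ⟨_, hyz⟩ (by push_cast; linear_combination hdet')
  obtain ⟨y', rfl⟩ := exists_int_eq_of_bezout (d := -n) (n := -d) ⟨_, hyy⟩ ⟨_, hxx⟩ ⟨_, hww⟩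
    ⟨_, hzz⟩ ⟨_, hyx⟩ ⟨_, hyw⟩ ⟨_, hyz⟩ ⟨_, hxw⟩ (by push_cast; linear_combination hdet')
  obtain ⟨z', rfl⟩ := exists_int_eq_of_bezout (d := -n) (n := -d) ⟨_, hzz⟩ ⟨_, hxx⟩ ⟨_, hww⟩
    ⟨_, hyy⟩ ⟨_, hzx⟩ ⟨_, hzw⟩ ⟨_, hzy⟩ ⟨_, hxw⟩ (by push_cast; linear_combination hdet')
  refine ⟨d, dvd_mul_right d n, by rwa [Nat.mul_div_cancel_left n hd0], x', y', z', w', ?_⟩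
  rw [hg, hsqrt, ← hu]
  push_cast
  rw [← hu]
  ext i j
  fin_cases i <;> fin_cases j <;> simp <;> field_simp

lemma exists_isAtkinLehner_of_mem_normalizer {N : ℕ} (hN : 0 < N) (hN4 : N ≠ 4)
    {g : Matrix.SpecialLinearGroup (Fin 2) ℝ}
    (hg : g ∈ Subgroup.normalizer (PMGamma1 N : Set (Matrix.SpecialLinearGroup (Fin 2) ℝ))) :
    ∃ d : ℕ, d ∣ N ∧ Nat.gcd d (N / d) = 1 ∧ IsAtkinLehner N d g := by
  let T : Matrix.SpecialLinearGroup (Fin 2) ℝ := ⟨!![1, 1; 0, 1], by simp⟩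
  let L : Matrix.SpecialLinearGroup (Fin 2) ℝ := ⟨!![1, 0; (N : ℝ), 1], by simp⟩
  have hT : T ∈ PMGamma1 N :=
    (PMGamma1_mem_iff _ _).mpr ⟨1, 0, 1, 0, 0, Or.inl rfl, by simp [T]⟩
  have hL : L ∈ PMGamma1 N :=
    (PMGamma1_mem_iff _ _).mpr ⟨1, 0, 0, 1, 0, Or.inl rfl, by simp [L]⟩
  have key : ∀ h : Matrix.SpecialLinearGroup (Fin 2) ℝ,
      h ∈ Subgroup.normalizer (PMGamma1 N : Set (Matrix.SpecialLinearGroup (Fin 2) ℝ)) →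
      ∀ a b c e : ℝ, (h : Matrix (Fin 2) (Fin 2) ℝ) = !![a, b; c, e] →
      (∃ k : ℤ, a ^ 2 = k) ∧ (∃ k : ℤ, a * c = N * k) ∧ (∃ k : ℤ, c ^ 2 = N * k) ∧
      (∃ k : ℤ, N * b ^ 2 = k) ∧ (∃ k : ℤ, b * e = k) := by
    intro h hh a b c e habce
    have hdet : a * e - b * c = 1 := by
      have := h.det_coe
      rwa [habce, Matrix.det_fin_two_of] at this
    rw [Subgroup.mem_normalizer_iff] at hh
    have hTc : ((h * T * h⁻¹ : Matrix.SpecialLinearGroup (Fin 2) ℝ) :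
        Matrix (Fin 2) (Fin 2) ℝ) = !![1 - a * c, a ^ 2; -c ^ 2, 1 + a * c] := by
      rw [Matrix.SpecialLinearGroup.coe_mul, Matrix.SpecialLinearGroup.coe_mul,
        Matrix.SpecialLinearGroup.coe_inv, habce, Matrix.adjugate_fin_two]
      ext i j
      fin_cases i <;> fin_cases j <;> simp [Matrix.mul_apply, Fin.sum_univ_two, T] <;>
        first | linear_combination hdet | ring
    have hLc : ((h * L * h⁻¹ : Matrix.SpecialLinearGroup (Fin 2) ℝ) :
        Matrix (Fin 2) (Fin 2) ℝ) =
          !![1 - -(N * (b * e)), -(N * b ^ 2); N * e ^ 2, 1 + -(N * (b * e))] := by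
      rw [Matrix.SpecialLinearGroup.coe_mul, Matrix.SpecialLinearGroup.coe_mul,
        Matrix.SpecialLinearGroup.coe_inv, habce, Matrix.adjugate_fin_two]
      ext i j
      fin_cases i <;> fin_cases j <;> simp [Matrix.mul_apply, Fin.sum_univ_two, L] <;>
        first | linear_combination hdet | ring
    obtain ⟨⟨k₁, h₁⟩, ⟨k₂, h₂⟩, ⟨k₃, h₃⟩⟩ :=
      entries_of_unipotent_mem_PMGamma1 hN4 ((hh T).mp hT) hTc
    obtain ⟨⟨l₁, g₁⟩, ⟨l₂, g₂⟩, -⟩ :=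
      entries_of_unipotent_mem_PMGamma1 hN4 ((hh L).mp hL) hLc
    have hNR : (N : ℝ) ≠ 0 := by positivity
    refine ⟨⟨k₂, h₂⟩, ⟨k₁, h₁⟩, ⟨-k₃, ?_⟩, ⟨-l₂, ?_⟩, ⟨-l₁, ?_⟩⟩
    · push_cast; linear_combination -h₃
    · push_cast; linear_combination -g₂
    · apply mul_left_cancel₀ hNR
      push_cast; linear_combination -g₁
  have hg_eq := Matrix.eta_fin_two (g : Matrix (Fin 2) (Fin 2) ℝ)
  have hginv : ((g⁻¹ : Matrix.SpecialLinearGroup (Fin 2) ℝ) : Matrix (Fin 2) (Fin 2) ℝ) =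
      !![g 1 1, -g 0 1; -g 1 0, g 0 0] := by
    rw [Matrix.SpecialLinearGroup.coe_inv, Matrix.adjugate_fin_two]
  obtain ⟨haa, hac, hcc, hbb, hbe⟩ := key g hg _ _ _ _ hg_eq
  obtain ⟨hee, ⟨k, hec⟩, -, -, ⟨l, hab⟩⟩ := key g⁻¹ (inv_mem hg) _ _ _ _ hginv
  refine exists_isAtkinLehner_of_entries hN g hg_eq haa hee hbb hcc hac ⟨-k, ?_⟩ hbe ⟨-l, ?_⟩
  · push_cast; linear_combination -hec
  · push_cast; linear_combination -hab

/-- For `N ≠ 4`, the normalizer in `SL(2, ℝ)` of `±Γ₁(N)` is generated by `-1`, the image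
of `Γ₀(N)`, and the Atkin–Lehner matrices `w_d` for Hall divisors `d` of `N`; that is,
`Norm(Γ₁(N))/±Γ₁(N)` is generated by `Γ₀(N)/±1` and the `w_d` with `d ∣ N`,
`gcd(d, N/d) = 1`. -/
theorem normalizer_Gamma1_eq_closure
    (N : ℕ) (hN : 0 < N) (hN4 : N ≠ 4) :
    Subgroup.normalizer (PMGamma1 N) =
      Subgroup.closure
        ({-1} ∪ (SL2ZtoSL2R '' (Gamma0 N : Set (Matrix.SpecialLinearGroup (Fin 2) ℤ))) ∪
          {w : Matrix.SpecialLinearGroup (Fin 2) ℝ |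
            ∃ d : ℕ, d ∣ N ∧ Nat.gcd d (N / d) = 1 ∧ IsAtkinLehner N d w}) := by
  apply le_antisymm
  · intro g hg
    exact Subgroup.subset_closure (Or.inr (exists_isAtkinLehner_of_mem_normalizer hN hN4 hg))
  · rw [Subgroup.closure_le]
    rintro g ((hg | ⟨γ, hγ, rfl⟩) | ⟨d, hd, -, hg⟩)
    · rw [Set.mem_singleton_iff.mp hg]
      refine IsAtkinLehner.mem_normalizer hN (one_dvd N) ⟨-1, 0, 0, -1, ?_⟩
      ext i j
      fin_cases i <;> fin_cases j <;> simp
    · exact (isAtkinLehner_one_of_mem_Gamma0 hγ).mem_normalizer hN (one_dvd N)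
    · exact hg.mem_normalizer hN hd
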